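/- For every p ∈ (0, 1/2] and every ε > 0 there exists N such that for every n ≥ N the following holds: for every deterministic (n, Rn)-code with rate R = max(1 − 4p, 0) + ε, there exists a causal adversary with power p against which the probability of error of the code is at least ε/(512p). (Quantitative form of Theorem 1, the (1−4p)^+ converse for deterministic codes.) -/

import Mathlib

open Finset

/-- The prefix `(x_1, …, x_{i+1})` (0-indexed: `x_0, …, x_i`) of a word `x : Fin n → Bool`. -/
def wordPrefix {n : ℕ} (x : Fin n → Bool) (i : Fin n) : Fin (i.1 + 1) → Bool :=
  fun k => x ⟨k.1, lt_of_le_of_lt (Nat.lt_succ_iff.mp k.isLt) i.isLt⟩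

/-- A causal adversary with power `p` on block length `n`: a (finite) jamming random
variable `J` with distribution `μ`, and for each position `i` a jamming function `g i`
depending only on the prefix `(x_1, …, x_i)` of the transmitted word and on `J`, flipping
at most `p * n` bits in total. -/
structure CausalAdversary (n : ℕ) (p : ℝ) where
  J : Type
  [instJ : Fintype J]
  μ : J → ℝ
  μ_nonneg : ∀ j, 0 ≤ μ j
  μ_sum : ∑ j, μ j = 1
  g : (i : Fin n) → (Fin (i.1 + 1) → Bool) → J → Bool
  power : ∀ (x : Fin n → Bool) (j : J),
    (((univ : Finset (Fin n)).filter (fun i => g i (wordPrefix x i) j = true)).card : ℝ) ≤ p * n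

attribute [instance] CausalAdversary.instJ

/-- The word received by Bob when Alice transmits `x` and the adversary's randomness is `j`:
`y_i = x_i XOR g_i((x_1,…,x_i), j)`. -/
def CausalAdversary.received {n : ℕ} {p : ℝ} (A : CausalAdversary n p)
    (x : Fin n → Bool) (j : A.J) : Fin n → Bool :=
  fun i => xor (x i) (A.g i (wordPrefix x i) j)

/-- The number of messages of a deterministic `(n, R n)`-code: `⌈2^{R n}⌉`. -/
noncomputable def numMessages (n : ℕ) (R : ℝ) : ℕ := ⌈(2 : ℝ) ^ (R * n)⌉₊

/-- A deterministic `(n, R n)`-code: an injective encoder on the message set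
`{1, …, ⌈2^{Rn}⌉}` together with a possibly randomized decoder (given by, for each received
word `y`, a probability distribution `dec y` on the messages). -/
structure DetCode (n : ℕ) (R : ℝ) where
  enc : Fin (numMessages n R) → (Fin n → Bool)
  enc_inj : Function.Injective enc
  dec : (Fin n → Bool) → Fin (numMessages n R) → ℝ
  dec_nonneg : ∀ y u, 0 ≤ dec y u
  dec_sum : ∀ y, ∑ u, dec y u = 1

/-- The probability of error of a deterministic code against a causal adversary: the
probability, over a uniformly random message `u`, the adversary's randomness, and the
decoder's randomness, that the decoded message differs from `u`. -/
noncomputable def DetCode.errProb {n : ℕ} {R p : ℝ} (C : DetCode n R)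
    (A : CausalAdversary n p) : ℝ :=
  (1 / (numMessages n R : ℝ)) *
    ∑ u, ∑ j, A.μ j * (1 - C.dec (A.received (C.enc u) j) u)

/-!
The adversary waits and then pushes. Let `R' < R` be close to `R`. During the first `R' n` symbols
it does nothing; since there are far more than `2 ^ (R' n)` codewords, most of them still share
the head seen so far with many others. On the remaining `(1 - R') n` symbols it pushes the
transmitted codeword towards another codeword with the same head. By Plotkin's argument two such
codewords disagree on average in at most `(1 - R') n / 2` places, and by Markov's inequality a
fraction of at least about `1 - (1 - R') / (4 p)` of the pairs disagree in at most `2 p n` places.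
For such a pair `x, z`, changing `x` to agree with `z` at their first `p n` disagreements yields
the same word as changing `z` to agree with `x` at the remaining ones, and on that word the error
probabilities of the decoder for `x` and for `z` add up to at least `1`. Averaging over the pairs
fixes, for each head, a single target and a range of disagreements to flip which are bad for the
decoder.
-/

open Filter Topology

section Push

variable {κ α : Type*} [LinearOrder κ] [Fintype κ] [DecidableEq α]

/-- The rank of the position `i` among the disagreements of `x` and `z`: the number of disagreements
strictly before `i`. It is meant for positions `i` of disagreement but defined for all. -/
def diffRank (x z : κ → α) (i : κ) : ℕ :=
  #{k | k < i ∧ x k ≠ z k}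

/-- The word obtained from `x` by pushing it towards `z`: among the positions where `x` and `z`
disagree, those whose rank lies in `s` are set to the value of `z`. Positions of agreement need no
separate case, as there both branches coincide. -/
def push (s : Finset ℕ) (x z : κ → α) : κ → α :=
  fun i => if diffRank x z i ∈ s then z i else x i

lemma diffRank_comm (x z : κ → α) : diffRank x z = diffRank z x := by
  simp only [funext_iff, diffRank, ne_comm, implies_true]

lemma diffRank_strictMonoOn (x z : κ → α) : StrictMonoOn (diffRank x z) {i | x i ≠ z i} := by
  intro i hi j _ hij
  refine card_lt_card (ssubset_iff_of_subset (fun k hk => ?_) |>.mpr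
    ⟨i, mem_filter.mpr ⟨mem_univ i, hij, hi⟩, by simp⟩)
  simp only [mem_filter, mem_univ, true_and] at hk ⊢
  exact ⟨hk.1.trans hij, hk.2⟩

lemma diffRank_lt_hammingDist {x z : κ → α} {i : κ} (hi : x i ≠ z i) :
    diffRank x z i < hammingDist x z := by
  refine card_lt_card (ssubset_iff_of_subset (fun k hk => ?_) |>.mpr
    ⟨i, mem_filter.mpr ⟨mem_univ i, hi⟩, by simp⟩)
  simp only [mem_filter, mem_univ, true_and] at hk ⊢
  exact hk.2

lemma push_apply_of_eq (s : Finset ℕ) {x z : κ → α} {i : κ} (h : x i = z i) :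
    push s x z i = x i := by
  simp [push, h]

lemma push_apply_congr (s : Finset ℕ) {x x' z : κ → α} {i : κ} (h : ∀ k ≤ i, x k = x' k) :
    push s x z i = push s x' z i := by
  have hrank : diffRank x z i = diffRank x' z i :=
    congrArg card (filter_congr fun k _ => and_congr_right fun hk => by rw [h k hk.le])
  simp only [push, hrank, h i le_rfl]

lemma hammingDist_push_le (s : Finset ℕ) (x z : κ → α) : hammingDist x (push s x z) ≤ #s := by
  have hne : ∀ i, x i ≠ push s x z i → diffRank x z i ∈ s ∧ x i ≠ z i := by
    intro i hi
    by_cases hs : diffRank x z i ∈ s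
    · exact ⟨hs, by simpa [push, hs] using hi⟩
    · simp [push, hs] at hi
  refine card_le_card_of_injOn (diffRank x z) (fun i hi => ?_)
    ((diffRank_strictMonoOn x z).injOn.mono fun i hi => ?_)
  · exact (hne i (mem_filter.mp hi).2).1
  · exact (hne i (mem_filter.mp hi).2).2

lemma push_eq_push_swap {s t : Finset ℕ} {x z : κ → α}
    (h : ∀ r < hammingDist x z, r ∈ t ↔ r ∉ s) : push s x z = push t z x := by
  funext i
  by_cases hi : x i = z i
  · rw [push_apply_of_eq s hi, push_apply_of_eq t hi.symm, hi]
  · have hr := h _ (diffRank_lt_hammingDist hi)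
    by_cases hs : diffRank x z i ∈ s <;> simp [push, diffRank_comm z x, hr, hs]

end Push

section Confusion

variable {ι κ : Type*} [Fintype κ]

lemma sum_sum_ne_le (T : Finset ι) (f : ι → Bool) :
    ∑ u ∈ T, ∑ v ∈ T, (if f u ≠ f v then (1 : ℝ) else 0) ≤ (#T : ℝ) ^ 2 / 2 := by
  let sign : ι → ℝ := fun u => if f u then 1 else -1
  have hsign : ∀ u v, (if f u ≠ f v then (1 : ℝ) else 0) = 1 / 2 - sign u * sign v / 2 := by
    intro u v
    cases hu : f u <;> cases hv : f v <;> norm_num [sign, hu, hv]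
  calc ∑ u ∈ T, ∑ v ∈ T, (if f u ≠ f v then (1 : ℝ) else 0)
      = (#T : ℝ) ^ 2 / 2 - (∑ u ∈ T, sign u) ^ 2 / 2 := by
        simp only [hsign, sum_sub_distrib, ← sum_div, sq (∑ u ∈ T, sign u), sum_mul_sum,
          sum_const, nsmul_eq_mul]
        ring
    _ ≤ (#T : ℝ) ^ 2 / 2 := sub_le_self _ (by positivity)

lemma sum_sum_hammingDist_le (T : Finset ι) (S : Finset κ) (x : ι → κ → Bool)
    (hS : ∀ u ∈ T, ∀ v ∈ T, ∀ k ∉ S, x u k = x v k) :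
    ∑ u ∈ T, ∑ v ∈ T, (hammingDist (x u) (x v) : ℝ) ≤ #S * ((#T : ℝ) ^ 2 / 2) := by
  have hdist : ∀ u ∈ T, ∀ v ∈ T, (hammingDist (x u) (x v) : ℝ) =
      ∑ k ∈ S, if x u k ≠ x v k then (1 : ℝ) else 0 := by
    intro u hu v hv
    rw [hammingDist, ← sum_boole]
    exact (sum_subset (subset_univ S) fun k _ hk => by simp [hS u hu v hv k hk]).symm
  calc ∑ u ∈ T, ∑ v ∈ T, (hammingDist (x u) (x v) : ℝ)
      = ∑ u ∈ T, ∑ v ∈ T, ∑ k ∈ S, (if x u k ≠ x v k then (1 : ℝ) else 0) :=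
        sum_congr rfl fun u hu => sum_congr rfl fun v hv => hdist u hu v hv
    _ = ∑ k ∈ S, ∑ u ∈ T, ∑ v ∈ T, (if x u k ≠ x v k then (1 : ℝ) else 0) := by
        rw [sum_comm (s := S)]
        exact sum_congr rfl fun u _ => sum_comm
    _ ≤ ∑ _k ∈ S, (#T : ℝ) ^ 2 / 2 := sum_le_sum fun k _ => sum_sum_ne_le T fun u => x u k
    _ = #S * ((#T : ℝ) ^ 2 / 2) := by rw [sum_const, nsmul_eq_mul]

variable {α : Type*} [LinearOrder κ] [DecidableEq α]

/-- Here `e y u` is the probability that the decoder errs when it receives `y` and the message is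
`u`. If the words are at distance at most `2 * K`, then both pushes lead to the same word. -/
lemma one_sub_hammingDist_div_le_error_add_error [DecidableEq ι] {e : (κ → α) → ι → ℝ}
    (he : ∀ y u, 0 ≤ e y u) (hpair : ∀ y u v, u ≠ v → 1 ≤ e y u + e y v)
    (x : ι → κ → α) (K : ℕ) (u v : ι) :
    1 - (if u = v then 1 else 0) - (hammingDist (x u) (x v) : ℝ) / (2 * K + 1) ≤
      e (push (range K) (x u) (x v)) u + e (push (Ico K (2 * K)) (x v) (x u)) v := by
  have hnonneg := add_nonneg (he (push (range K) (x u) (x v)) u)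
    (he (push (Ico K (2 * K)) (x v) (x u)) v)
  have hdist : 0 ≤ (hammingDist (x u) (x v) : ℝ) / (2 * K + 1) := by positivity
  by_cases huv : u = v
  · rw [if_pos huv]
    linarith
  rw [if_neg huv]
  rcases le_or_gt (hammingDist (x u) (x v)) (2 * K) with hle | hgt
  · have hpush : push (range K) (x u) (x v) = push (Ico K (2 * K)) (x v) (x u) :=
      push_eq_push_swap fun r hr => by simp [hr.trans_le hle]
    rw [← hpush]
    linarith [hpair (push (range K) (x u) (x v)) u v huv]
  · have hfar : 1 ≤ (hammingDist (x u) (x v) : ℝ) / (2 * K + 1) := by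
      rw [one_le_div (by positivity)]
      exact_mod_cast hgt
    linarith

lemma card_sq_sub_le_sum_error {e : (κ → α) → ι → ℝ}
    (he : ∀ y u, 0 ≤ e y u) (hpair : ∀ y u v, u ≠ v → 1 ≤ e y u + e y v)
    (x : ι → κ → α) (K : ℕ) (T : Finset ι) :
    (#T : ℝ) ^ 2 - #T - (∑ u ∈ T, ∑ v ∈ T, (hammingDist (x u) (x v) : ℝ)) / (2 * K + 1) ≤
      ∑ v ∈ T, (∑ u ∈ T, e (push (range K) (x u) (x v)) u +
        ∑ u ∈ T, e (push (Ico K (2 * K)) (x u) (x v)) u) := by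
  classical
  calc (#T : ℝ) ^ 2 - #T - (∑ u ∈ T, ∑ v ∈ T, (hammingDist (x u) (x v) : ℝ)) / (2 * K + 1)
      = ∑ u ∈ T, ∑ v ∈ T,
          (1 - (if u = v then 1 else 0) - (hammingDist (x u) (x v) : ℝ) / (2 * K + 1)) := by
        simp only [sum_sub_distrib, sum_div, sum_ite_eq, sum_ite_mem, inter_self, sum_const,
          nsmul_eq_mul, mul_one, sq]
    _ ≤ ∑ u ∈ T, ∑ v ∈ T,
          (e (push (range K) (x u) (x v)) u + e (push (Ico K (2 * K)) (x v) (x u)) v) :=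
        sum_le_sum fun u _ => sum_le_sum fun v _ =>
          one_sub_hammingDist_div_le_error_add_error he hpair x K u v
    _ = ∑ v ∈ T, (∑ u ∈ T, e (push (range K) (x u) (x v)) u +
          ∑ u ∈ T, e (push (Ico K (2 * K)) (x u) (x v)) u) := by
        simp only [sum_add_distrib]
        rw [sum_comm]

lemma exists_confusing_target {e : (κ → Bool) → ι → ℝ}
    (he : ∀ y u, 0 ≤ e y u) (hpair : ∀ y u v, u ≠ v → 1 ≤ e y u + e y v)
    (x : ι → κ → Bool) (K : ℕ) {T : Finset ι} (hT : T.Nonempty) (S : Finset κ)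
    (hS : ∀ u ∈ T, ∀ v ∈ T, ∀ k ∉ S, x u k = x v k) :
    ∃ v ∈ T, ∃ s : Finset ℕ, #s = K ∧
      ((1 - #S / (4 * K + 2)) * #T - 1) / 2 ≤ ∑ u ∈ T, e (push s (x u) (x v)) u := by
  have hplotkin := div_le_div_of_nonneg_right (sum_sum_hammingDist_le T S x hS)
    (show (0 : ℝ) ≤ 2 * K + 1 by positivity)
  have hsum : ∑ _v ∈ T, ((1 - (#S : ℝ) / (4 * K + 2)) * #T - 1) ≤
      ∑ v ∈ T, (∑ u ∈ T, e (push (range K) (x u) (x v)) u +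
        ∑ u ∈ T, e (push (Ico K (2 * K)) (x u) (x v)) u) :=
    calc ∑ _v ∈ T, ((1 - (#S : ℝ) / (4 * K + 2)) * #T - 1)
        = (#T : ℝ) ^ 2 - #T - #S * ((#T : ℝ) ^ 2 / 2) / (2 * K + 1) := by
          rw [sum_const, nsmul_eq_mul, show (4 * K + 2 : ℝ) = 2 * (2 * K + 1) by ring]
          field_simp
          ring
      _ ≤ (#T : ℝ) ^ 2 - #T -
          (∑ u ∈ T, ∑ v ∈ T, (hammingDist (x u) (x v) : ℝ)) / (2 * K + 1) := by linarith
      _ ≤ _ := card_sq_sub_le_sum_error he hpair x K T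
  obtain ⟨v, hv, hle⟩ := exists_le_of_sum_le hT hsum
  rcases le_total (∑ u ∈ T, e (push (range K) (x u) (x v)) u)
    (∑ u ∈ T, e (push (Ico K (2 * K)) (x u) (x v)) u) with h | h
  · exact ⟨v, hv, Ico K (2 * K), by simp [two_mul], by linarith⟩
  · exact ⟨v, hv, range K, card_range K, by linarith⟩

end Confusion

section Causal

variable {n : ℕ} {α : Type*}

lemma take_eq_take_iff {m : ℕ} (hm : m ≤ n) {x x' : Fin n → α} :
    Fin.take m hm x = Fin.take m hm x' ↔ ∀ k : Fin n, k.1 < m → x k = x' k :=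
  ⟨fun h k hk => congrFun h ⟨k, hk⟩, fun h => funext fun k => h _ k.2⟩

lemma take_surjective [Nonempty α] {m : ℕ} (hm : m ≤ n) :
    Function.Surjective (Fin.take m hm : (Fin n → α) → Fin m → α) :=
  (Fin.castLE_injective hm).surjective_comp_right

/-- A map from transmitted words to received words is causal if each received symbol depends only on
the symbols transmitted so far, including the current one. -/
def IsCausal (F : (Fin n → α) → Fin n → α) : Prop :=
  ∀ ⦃x x' i⦄, (∀ k ≤ i, x k = x' k) → F x i = F x' i

/-- The attack that waits for the first `m` symbols and then, having seen the head `h`, pushes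
the transmitted word towards `z h` at the disagreements with rank in `s h`. If `z h` has head
`h`, then `push` makes no change before time `m`, so the waiting need not be prescribed. -/
def waitAndPush [DecidableEq α] {m : ℕ} (hm : m ≤ n) (z : (Fin m → α) → Fin n → α)
    (s : (Fin m → α) → Finset ℕ) (x : Fin n → α) : Fin n → α :=
  push (s (Fin.take m hm x)) x (z (Fin.take m hm x))

lemma isCausal_waitAndPush [DecidableEq α] {m : ℕ} (hm : m ≤ n) {z : (Fin m → α) → Fin n → α}
    (hz : ∀ h, Fin.take m hm (z h) = h) (s : (Fin m → α) → Finset ℕ) :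
    IsCausal (waitAndPush hm z s) := by
  intro x x' i hxx'
  rcases lt_or_ge i.1 m with hi | hi
  · have hwait : ∀ y, waitAndPush hm z s y i = y i := fun y =>
      push_apply_of_eq _ ((take_eq_take_iff hm).mp (hz _).symm i hi)
    rw [hwait, hwait, hxx' i le_rfl]
  · have hhead : Fin.take m hm x = Fin.take m hm x' :=
      (take_eq_take_iff hm).mpr fun k hk => hxx' k (hk.le.trans hi)
    rw [waitAndPush, waitAndPush, hhead]
    exact push_apply_congr _ hxx'

lemma IsCausal.exists_causalAdversary {F : (Fin n → Bool) → Fin n → Bool} (hF : IsCausal F) {p : ℝ}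
    (hpower : ∀ x, (hammingDist x (F x) : ℝ) ≤ p * n) :
    ∃ A : CausalAdversary n p, ∀ {R : ℝ} (C : DetCode n R),
      C.errProb A = 1 / (numMessages n R : ℝ) * ∑ u, (1 - C.dec (F (C.enc u)) u) := by
  choose extend hextend using fun i : Fin n => take_surjective (α := Bool) (Nat.succ_le_of_lt i.2)
  have hcausal : ∀ x i, F (extend i (wordPrefix x i)) i = F x i := fun x i =>
    hF fun k hk => (take_eq_take_iff _).mp (hextend i (wordPrefix x i)) k (Nat.lt_succ_of_le hk)
  have hflip : ∀ x i, xor (wordPrefix x i (Fin.last i)) (F (extend i (wordPrefix x i)) i) =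
      xor (x i) (F x i) := fun x i => congrArg (xor (x i)) (hcausal x i)
  let A : CausalAdversary n p :=
    { J := Unit
      μ := fun _ => 1
      μ_nonneg := fun _ => zero_le_one
      μ_sum := by simp
      g := fun i w _ => xor (w (Fin.last i)) (F (extend i w) i)
      power := fun x _ => by
        simpa only [hammingDist, hflip, bne_iff_ne] using hpower x }
  have hreceived : ∀ x j, A.received x j = F x := fun x j => funext fun i => by
    simp [A, CausalAdversary.received, hflip]
  exact ⟨A, fun C => by simp [DetCode.errProb, hreceived, A]⟩

end Causal

section Code

variable {n : ℕ} {R : ℝ}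

lemma rpow_le_numMessages (n : ℕ) (R : ℝ) : (2 : ℝ) ^ (R * n) ≤ numMessages n R :=
  Nat.le_ceil _

lemma DetCode.dec_le_one (C : DetCode n R) (y : Fin n → Bool) (u : Fin (numMessages n R)) :
    C.dec y u ≤ 1 := by
  rw [← C.dec_sum y]
  exact single_le_sum (fun w _ => C.dec_nonneg y w) (mem_univ u)

lemma DetCode.dec_add_dec_le_one (C : DetCode n R) (y : Fin n → Bool)
    {u v : Fin (numMessages n R)} (h : u ≠ v) : C.dec y u + C.dec y v ≤ 1 := by
  rw [← C.dec_sum y, ← sum_pair h]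
  exact sum_le_sum_of_subset_of_nonneg (subset_univ _) fun w _ _ => C.dec_nonneg y w

lemma DetCode.rate_le_one (C : DetCode n R) (hn : 0 < n) : R ≤ 1 := by
  have hcard : numMessages n R ≤ 2 ^ n := by
    simpa using Fintype.card_le_of_injective C.enc C.enc_inj
  have hpow : (2 : ℝ) ^ (R * n) ≤ 2 ^ (1 * n : ℝ) := by
    rw [one_mul, Real.rpow_natCast]
    exact (rpow_le_numMessages n R).trans (by exact_mod_cast hcard)
  exact le_of_mul_le_mul_right ((Real.rpow_le_rpow_left_iff one_lt_two).mp hpow)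
    (Nat.cast_pos.mpr hn)

lemma DetCode.exists_confusing_target_of_head (C : DetCode n R) {m : ℕ} (hm : m ≤ n) (K : ℕ)
    (h : Fin m → Bool) :
    ∃ (z : Fin n → Bool) (s : Finset ℕ), Fin.take m hm z = h ∧ #s = K ∧
      ((1 - ((n : ℝ) - m) / (4 * K + 2)) * #{u | Fin.take m hm (C.enc u) = h} - 1) / 2 ≤
        ∑ u with Fin.take m hm (C.enc u) = h, (1 - C.dec (push s (C.enc u) z) u) := by
  set T : Finset (Fin (numMessages n R)) := {u | Fin.take m hm (C.enc u) = h}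
  have hT : ∀ u ∈ T, Fin.take m hm (C.enc u) = h := fun u hu => (mem_filter.mp hu).2
  rcases T.eq_empty_or_nonempty with hempty | hne
  · obtain ⟨z, hz⟩ := take_surjective hm h
    exact ⟨z, range K, hz, card_range K, by norm_num [hempty]⟩
  let S : Finset (Fin n) := {k | ¬ k.1 < m}
  have hS : ((#S : ℕ) : ℝ) = n - m := by
    have hcard := card_filter_add_card_filter_not (s := (univ : Finset (Fin n))) (fun k => k.1 < m)
    rw [Fin.card_filter_val_lt, min_eq_right hm, card_univ, Fintype.card_fin] at hcard
    exact eq_sub_of_add_eq' (by exact_mod_cast hcard)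
  have hagree : ∀ u ∈ T, ∀ v ∈ T, ∀ k ∉ S, C.enc u k = C.enc v k := fun u hu v hv k hk =>
    (take_eq_take_iff hm).mp ((hT u hu).trans (hT v hv).symm) k (by simpa [S] using hk)
  obtain ⟨v, hv, s, hs, hle⟩ := exists_confusing_target (e := fun y u => 1 - C.dec y u)
    (fun y u => sub_nonneg.mpr (C.dec_le_one y u))
    (fun y u v huv => by linarith [C.dec_add_dec_le_one y huv]) C.enc K hne S hagree
  exact ⟨C.enc v, s, hT v hv, hs, hS ▸ hle⟩

lemma DetCode.exists_adversary_errProb_ge (C : DetCode n R) {m K : ℕ} {p : ℝ} (hm : m ≤ n)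
    (hK : (K : ℝ) ≤ p * n) :
    ∃ A : CausalAdversary n p,
      (1 - ((n : ℝ) - m) / (4 * K + 2) - 2 ^ m / 2 ^ (R * n)) / 2 ≤ C.errProb A := by
  choose z s hz hs herr using C.exists_confusing_target_of_head hm K
  obtain ⟨A, hA⟩ := (isCausal_waitAndPush hm hz s).exists_causalAdversary (p := p) fun x =>
    (Nat.cast_le.mpr ((hammingDist_push_le _ _ _).trans_eq (hs _))).trans hK
  refine ⟨A, ?_⟩
  set M : ℝ := (numMessages n R : ℝ)
  have hM : (2 : ℝ) ^ (R * n) ≤ M := rpow_le_numMessages n R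
  have hpow : (0 : ℝ) < 2 ^ (R * n) := by positivity
  have hcard : ∑ h, (#{u | Fin.take m hm (C.enc u) = h} : ℝ) = M := by
    rw [← Nat.cast_sum, ← card_eq_sum_card_fiberwise fun _ _ => mem_coe.mpr (mem_univ _),
      card_univ, Fintype.card_fin]
  have hsum : ((1 - ((n : ℝ) - m) / (4 * K + 2)) * M - 2 ^ m) / 2 ≤
      ∑ u, (1 - C.dec (waitAndPush hm z s (C.enc u)) u) :=
    calc ((1 - ((n : ℝ) - m) / (4 * K + 2)) * M - 2 ^ m) / 2
        = ∑ h, ((1 - ((n : ℝ) - m) / (4 * K + 2)) *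
            #{u | Fin.take m hm (C.enc u) = h} - 1) / 2 := by
          rw [← sum_div, sum_sub_distrib, ← mul_sum, hcard]
          simp
      _ ≤ ∑ h, ∑ u with Fin.take m hm (C.enc u) = h,
            (1 - C.dec (push (s h) (C.enc u) (z h)) u) := sum_le_sum fun h _ => herr h
      _ = ∑ h, ∑ u with Fin.take m hm (C.enc u) = h,
            (1 - C.dec (waitAndPush hm z s (C.enc u)) u) :=
          sum_congr rfl fun h _ => sum_congr rfl fun u hu => by
            rw [waitAndPush, (mem_filter.mp hu).2]
      _ = _ := sum_fiberwise _ _ _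
  calc (1 - ((n : ℝ) - m) / (4 * K + 2) - 2 ^ m / 2 ^ (R * n)) / 2
      ≤ (1 - ((n : ℝ) - m) / (4 * K + 2) - 2 ^ m / M) / 2 := by gcongr
    _ = 1 / M * (((1 - ((n : ℝ) - m) / (4 * K + 2)) * M - 2 ^ m) / 2) := by
        field_simp [(hpow.trans_le hM).ne']
    _ ≤ 1 / M * ∑ u, (1 - C.dec (waitAndPush hm z s (C.enc u)) u) := by gcongr
    _ = C.errProb A := (hA C).symm

end Code

section Asymptotics

lemma tendsto_two_pow_floor_div_rpow {R R' : ℝ} (hR' : 0 ≤ R') (h : R' < R) :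
    Tendsto (fun n : ℕ => (2 : ℝ) ^ ⌊R' * n⌋₊ / 2 ^ (R * n)) atTop (𝓝 0) := by
  have hgeom : Tendsto (fun n : ℕ => ((2 : ℝ) ^ (R' - R)) ^ n) atTop (𝓝 0) :=
    tendsto_pow_atTop_nhds_zero_of_lt_one (by positivity)
      (Real.rpow_lt_one_of_one_lt_of_neg one_lt_two (sub_neg.mpr h))
  refine squeeze_zero (fun n => by positivity) (fun n => ?_) hgeom
  calc (2 : ℝ) ^ ⌊R' * n⌋₊ / 2 ^ (R * n) ≤ 2 ^ (R' * n) / 2 ^ (R * n) := by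
        rw [← Real.rpow_natCast]
        gcongr
        · exact one_le_two
        · exact Nat.floor_le (by positivity)
    _ = (2 ^ (R' - R)) ^ n := by
        rw [← Real.rpow_sub two_pos, ← sub_mul, Real.rpow_mul_natCast two_pos.le]

lemma tendsto_natFloor_mul_natCast_div {a : ℝ} (ha : 0 ≤ a) :
    Tendsto (fun n : ℕ => (⌊a * n⌋₊ : ℝ) / n) atTop (𝓝 a) :=
  (tendsto_nat_floor_mul_div_atTop ha).comp tendsto_natCast_atTop_atTop

lemma tendsto_sub_floor_div_floor {p R : ℝ} (hp : 0 < p) (hR : 0 ≤ R) :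
    Tendsto (fun n : ℕ => ((n : ℝ) - ⌊R * n⌋₊) / (4 * ⌊p * n⌋₊ + 2)) atTop
      (𝓝 ((1 - R) / (4 * p))) := by
  have hnum := (tendsto_natFloor_mul_natCast_div hR).const_sub 1
  have hden := ((tendsto_natFloor_mul_natCast_div hp.le).const_mul 4).add
    (tendsto_const_div_atTop_nhds_zero_nat 2)
  rw [add_zero] at hden
  refine (hnum.div hden (by positivity)).congr' ?_
  filter_upwards [eventually_gt_atTop 0] with n hn
  have hn' : (n : ℝ) ≠ 0 := by positivity
  simp only [Pi.div_apply]
  field_simp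

end Asymptotics

theorem det_converse_quantitative_general {p R δ : ℝ} (hp : 0 < p) (hR : 0 < R)
    (hδ : δ < (R - (1 - 4 * p)) / (8 * p)) :
    ∀ᶠ n : ℕ in atTop, ∀ C : DetCode n R, ∃ A : CausalAdversary n p, δ ≤ C.errProb A := by
  have hδR : δ * (8 * p) + (1 - 4 * p) < R :=
    lt_sub_iff_add_lt.mp ((lt_div_iff₀ (by positivity)).mp hδ)
  obtain ⟨R', hR', hR'R⟩ := exists_between (max_lt hR hδR)
  obtain ⟨hR'0, hδR'⟩ := max_lt_iff.mp hR'
  have hbound := (((tendsto_sub_floor_div_floor hp hR'0.le).const_sub 1).sub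
    (tendsto_two_pow_floor_div_rpow hR'0.le hR'R)).div_const 2
  have hδlim : δ < (1 - (1 - R') / (4 * p) - 0) / 2 := by
    rw [show (1 - (1 - R') / (4 * p) - 0) / 2 = (R' - (1 - 4 * p)) / (8 * p) by field_simp; ring,
      lt_div_iff₀ (by positivity)]
    exact lt_sub_iff_add_lt.mpr hδR'
  filter_upwards [hbound.eventually_const_le hδlim, eventually_gt_atTop 0] with n hδn hn C
  have hm : ⌊R' * n⌋₊ ≤ n := Nat.floor_le_of_le
    (mul_le_of_le_one_left n.cast_nonneg (hR'R.le.trans (C.rate_le_one hn)))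
  obtain ⟨A, hA⟩ := C.exists_adversary_errProb_ge hm (Nat.floor_le (by positivity : 0 ≤ p * n))
  exact ⟨A, hδn.trans hA⟩

/-- Quantitative form of Theorem 1: for every `p ∈ (0, 1/2]` and `ε > 0`, for all
sufficiently large `n`, every deterministic `(n, Rn)`-code with rate
`R = max(1 − 4p, 0) + ε` admits a causal adversary with power `p` forcing probability of
error at least `ε / (512 p)`. -/
theorem det_converse_quantitative (p ε : ℝ) (hp0 : 0 < p) (hp1 : p ≤ 1 / 2)
    (hε : 0 < ε) :
    ∃ N : ℕ, ∀ n ≥ N, ∀ C : DetCode n (max (1 - 4 * p) 0 + ε),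
      ∃ A : CausalAdversary n p, ε / (512 * p) ≤ C.errProb A := by
  refine eventually_atTop.mp (det_converse_quantitative_general hp0 (by positivity) ?_)
  calc ε / (512 * p) < ε / (8 * p) := by gcongr; norm_num
    _ ≤ (max (1 - 4 * p) 0 + ε - (1 - 4 * p)) / (8 * p) := by
      gcongr
      linarith [le_max_left (1 - 4 * p) 0]
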